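/- arXiv:2307.05608 — 2 statements merged into one kernel-verified Lean document; each statement's English description precedes it below -/
import Mathlib

section
/- Let ε > 0 and let P and Q be probability measures on a measurable space X with P absolutely continuous with respect to Q. Let 𝔻 be the probability measure on X × {0,1} defined by 𝔻 = (e^ε/(1+e^ε))·(Q ⊗ δ_0) + (1/(1+e^ε))·(P ⊗ δ_1), i.e., (X,Y) ∼ 𝔻 is a sample from Q labeled 0 with weight e^ε/(1+e^ε) and a sample from P labeled 1 with weight 1/(1+e^ε). Then H_ε(P‖Q) = (1+e^ε)·sup_{g : X → {0,1} measurable} 𝔻({(x,y) : g(x) = y}) − e^ε. -/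
open MeasureTheory

/-- Hockey-stick divergence of order `e^ε`:
`H_ε(P‖Q) = ∫ max{0, dP/dQ − e^ε} dQ`. -/
noncomputable def hockeyStickDiv {X : Type*} [MeasurableSpace X]
    (ε : ℝ) (P Q : Measure X) : ℝ :=
  ∫ x, max 0 ((P.rnDeriv Q x).toReal - Real.exp ε) ∂Q

/-- The labeled mixture `𝔻 = (e^ε/(1+e^ε))·(Q ⊗ δ_false) + (1/(1+e^ε))·(P ⊗ δ_true)`
on `X × Bool`, where `false` plays the role of the label `0` and `true` of `1`. -/
noncomputable def labeledMixture {X : Type*} [MeasurableSpace X]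
    (ε : ℝ) (P Q : Measure X) : Measure (X × Bool) :=
  ENNReal.ofReal (Real.exp ε / (1 + Real.exp ε)) • Q.prod (Measure.dirac false)
    + ENNReal.ofReal (1 / (1 + Real.exp ε)) • P.prod (Measure.dirac true)

/-! A classifier `g` is determined by the event `A = {g = true}`, and its accuracy is
`(e^ε Q(Aᶜ) + P(A)) / (1 + e^ε) = (e^ε + (P(A) - e^ε Q(A))) / (1 + e^ε)`. Since
`P(A) - e^ε Q(A) = ∫_A (dP/dQ - e^ε) dQ`, this is maximal when `A` is the event on which the
integrand is nonnegative, and the maximum of the integral is `H_ε(P‖Q)`. -/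

section

variable {X : Type*} [MeasurableSpace X]

lemma isGreatest_setIntegral_integral_max_zero {μ : Measure X} {f : X → ℝ}
    (hf : StronglyMeasurable f) (hfi : Integrable f μ) :
    IsGreatest ((fun s ↦ ∫ x in s, f x ∂μ) '' {s | MeasurableSet s}) (∫ x, max 0 (f x) ∂μ) := by
  have hs : MeasurableSet {x | 0 ≤ f x} := stronglyMeasurable_const.measurableSet_le hf
  have hmax : ∫ x in {x | 0 ≤ f x}, f x ∂μ = ∫ x, max 0 (f x) ∂μ := by
    rw [← integral_indicator hs]
    congr with x
    rw [Set.indicator_apply, max_def]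
    rfl
  refine ⟨⟨_, hs, hmax⟩, ?_⟩
  rintro _ ⟨s, hs, rfl⟩
  exact (setIntegral_le_nonneg hs hf hfi).trans_eq hmax

lemma setIntegral_toReal_rnDeriv_sub_const {P Q : Measure X} [IsFiniteMeasure P]
    [IsFiniteMeasure Q] (hPQ : P ≪ Q) (c : ℝ) (s : Set X) :
    ∫ x in s, ((P.rnDeriv Q x).toReal - c) ∂Q = P.real s - c * Q.real s := by
  rw [integral_sub Measure.integrable_toReal_rnDeriv.integrableOn (integrable_const c),
    Measure.setIntegral_toReal_rnDeriv hPQ, setIntegral_const, smul_eq_mul, mul_comm]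

theorem isGreatest_measureReal_sub_hockeyStickDiv (ε : ℝ) {P Q : Measure X} [IsFiniteMeasure P]
    [IsFiniteMeasure Q] (hPQ : P ≪ Q) :
    IsGreatest ((fun s ↦ P.real s - Real.exp ε * Q.real s) '' {s | MeasurableSet s})
      (hockeyStickDiv ε P Q) := by
  simp only [← setIntegral_toReal_rnDeriv_sub_const hPQ]
  exact isGreatest_setIntegral_integral_max_zero
    ((Measure.measurable_rnDeriv P Q).ennreal_toReal.sub_const _).stronglyMeasurable
    (Measure.integrable_toReal_rnDeriv.sub (integrable_const _))

/-- The probability that the classifier `g` predicts the label of a sample `(x, y) ∼ D`, as a real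
number. -/
noncomputable def accuracy {Y : Type*} [MeasurableSpace Y] (D : Measure (X × Y)) (g : X → Y) : ℝ :=
  D.real {p | g p.1 = p.2}

lemma prod_dirac_setOf_apply_fst_eq_snd {Y : Type*} [MeasurableSpace Y] [MeasurableEq Y]
    (μ : Measure X) [SFinite μ] {g : X → Y} (hg : Measurable g) (y : Y) :
    μ.prod (Measure.dirac y) {p | g p.1 = p.2} = μ (g ⁻¹' {y}) := by
  have hs : MeasurableSet {p : X × Y | g p.1 = p.2} :=
    measurableSet_eq_fun (hg.comp measurable_fst) measurable_snd
  rw [Measure.prod_dirac, Measure.map_apply measurable_prodMk_right hs]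
  rfl

lemma accuracy_labeledMixture (ε : ℝ) (P Q : Measure X) [IsFiniteMeasure P] [IsFiniteMeasure Q]
    {g : X → Bool} (hg : Measurable g) :
    accuracy (labeledMixture ε P Q) g =
      (Real.exp ε * Q.real (g ⁻¹' {false}) + P.real (g ⁻¹' {true})) / (1 + Real.exp ε) := by
  rw [accuracy, measureReal_def, labeledMixture, Measure.add_apply, Measure.smul_apply,
    Measure.smul_apply, prod_dirac_setOf_apply_fst_eq_snd Q hg,
    prod_dirac_setOf_apply_fst_eq_snd P hg, smul_eq_mul, smul_eq_mul,
    ENNReal.toReal_add (by finiteness) (by finiteness), ENNReal.toReal_mul, ENNReal.toReal_mul,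
    ENNReal.toReal_ofReal (by positivity), ENNReal.toReal_ofReal (by positivity),
    ← measureReal_def, ← measureReal_def]
  ring

lemma range_accuracy_labeledMixture (ε : ℝ) (P Q : Measure X) [IsFiniteMeasure P]
    [IsFiniteMeasure Q] :
    (Set.range fun g : {g : X → Bool // Measurable g} ↦ accuracy (labeledMixture ε P Q) g.1) =
      (fun s ↦ (Real.exp ε * Q.real sᶜ + P.real s) / (1 + Real.exp ε)) ''
        {s | MeasurableSet s} := by
  ext r
  constructor
  · rintro ⟨⟨g, hg⟩, rfl⟩
    have hcompl : (g ⁻¹' {true})ᶜ = g ⁻¹' {false} := by ext; simp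
    exact ⟨g ⁻¹' {true}, hg (measurableSet_singleton _), by
      simp only [accuracy_labeledMixture ε P Q hg, hcompl]⟩
  · rintro ⟨s, hs, rfl⟩
    have hg : Measurable s.boolIndicator :=
      measurable_to_bool (s.preimage_boolIndicator_true.symm ▸ hs)
    exact ⟨⟨s.boolIndicator, hg⟩, by
      simp only [accuracy_labeledMixture ε P Q hg, Set.preimage_boolIndicator_true,
        Set.preimage_boolIndicator_false]⟩

theorem isGreatest_accuracy_labeledMixture (ε : ℝ) {P Q : Measure X} [IsFiniteMeasure P]
    [IsFiniteMeasure Q] (hPQ : P ≪ Q) :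
    IsGreatest
      (Set.range fun g : {g : X → Bool // Measurable g} ↦ accuracy (labeledMixture ε P Q) g.1)
      ((Real.exp ε * Q.real Set.univ + hockeyStickDiv ε P Q) / (1 + Real.exp ε)) := by
  have hmono : Monotone fun t ↦ (Real.exp ε * Q.real Set.univ + t) / (1 + Real.exp ε) := by
    intro s t hst
    dsimp only
    gcongr
  have hrange :
      (Set.range fun g : {g : X → Bool // Measurable g} ↦ accuracy (labeledMixture ε P Q) g.1) =
        (fun t ↦ (Real.exp ε * Q.real Set.univ + t) / (1 + Real.exp ε)) ''
          ((fun s ↦ P.real s - Real.exp ε * Q.real s) '' {s | MeasurableSet s}) := by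
    rw [range_accuracy_labeledMixture, Set.image_image]
    refine Set.image_congr fun s hs ↦ ?_
    rw [measureReal_compl hs]
    ring
  rw [hrange]
  exact hmono.map_isGreatest (isGreatest_measureReal_sub_hockeyStickDiv ε hPQ)

theorem hockey_stick_as_classification_general (ε : ℝ) (P Q : Measure X) [IsFiniteMeasure P]
    [IsFiniteMeasure Q] (hPQ : P ≪ Q) :
    hockeyStickDiv ε P Q =
      (1 + Real.exp ε) *
        (⨆ g : {g : X → Bool // Measurable g},
          (labeledMixture ε P Q {p : X × Bool | g.1 p.1 = p.2}).toReal)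
        - Real.exp ε * Q.real Set.univ := by
  have hsup : (⨆ g : {g : X → Bool // Measurable g}, accuracy (labeledMixture ε P Q) g.1) =
      (Real.exp ε * Q.real Set.univ + hockeyStickDiv ε P Q) / (1 + Real.exp ε) :=
    (isGreatest_accuracy_labeledMixture ε hPQ).csSup_eq
  simp only [accuracy, measureReal_def] at hsup ⊢
  rw [hsup]
  field_simp
  ring

end

theorem hockey_stick_as_classification {X : Type*} [MeasurableSpace X]
    (ε : ℝ) (hε : 0 < ε) (P Q : Measure X)
    [IsProbabilityMeasure P] [IsProbabilityMeasure Q] (hPQ : P ≪ Q) :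
    hockeyStickDiv ε P Q =
      (1 + Real.exp ε) *
        (⨆ g : {g : X → Bool // Measurable g},
          (labeledMixture ε P Q {p : X × Bool | g.1 p.1 = p.2}).toReal)
        - Real.exp ε := by
  simpa using hockey_stick_as_classification_general ε P Q hPQ
end

section
/- Let ε > 0, δ ≥ 0, and let P and Q be probability measures on a measurable space X such that P is absolutely continuous with respect to Q and, for every measurable set A ⊆ X, P(A) ≤ e^ε·Q(A) + δ and Q(A) ≤ e^ε·P(A) + δ. Then ∫ |dP/dQ − 1| dQ ≤ e^ε − 1 + (1 + e^{−ε})·δ, where dP/dQ is the Radon–Nikodym derivative. -/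
/-!
Let `f = dP/dQ`. Off `{1 ≤ f}` and a `Q`-null set `N` carrying the singular part of `P`, the measure
`P` has density `f < 1`, so `B = {1 ≤ f} ∪ N` is a Hahn set of `P - Q` and
`∫ |f - 1| ∂Q ≤ (P B - Q B) + (Q Bᶜ - P Bᶜ)`, with equality when `P ≪ Q`.
With `c = e ^ ε`, the bound `p ≤ c * q + δ` is equivalent to
`p - q ≤ ((c - 1) * (p + q) + 2 * δ) / (c + 1)`. Using this symmetric form for `P` on `B` and for
`Q` on `Bᶜ`, the terms `p + q` add up to the total mass of `P` and `Q`. For probability measures the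
resulting bound `((c - 1) * 2 + 4 * δ) / (c + 1)` lies below the one claimed.
-/

open MeasureTheory

section HahnSet

variable {X : Type*} [MeasurableSpace X] (μ ν : Measure X) [IsFiniteMeasure μ] [IsFiniteMeasure ν]

lemma setIntegral_toReal_rnDeriv_sub_one (s : Set X) :
    ∫ x in s, ((μ.rnDeriv ν x).toReal - 1) ∂ν =
      μ.real s - (μ.singularPart ν).real s - ν.real s := by
  have lebesgue_decomposition :
      (ν.withDensity (μ.rnDeriv ν)).real s + (μ.singularPart ν).real s = μ.real s := by
    rw [← measureReal_add_apply, Measure.rnDeriv_add_singularPart]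
  rw [integral_sub Measure.integrable_toReal_rnDeriv.integrableOn (integrable_const 1),
    Measure.setIntegral_toReal_rnDeriv_eq_withDensity s, setIntegral_const, smul_eq_mul, mul_one,
    ← lebesgue_decomposition, add_sub_cancel_right]

lemma exists_integral_abs_toReal_rnDeriv_sub_one_add_singularPart_eq :
    ∃ B, MeasurableSet B ∧
      ∫ x, |(μ.rnDeriv ν x).toReal - 1| ∂ν + (μ.singularPart ν).real Set.univ =
        (μ.real B - ν.real B) + (ν.real Bᶜ - μ.real Bᶜ) := by
  have sing := Measure.mutuallySingular_singularPart μ ν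
  set B := {x | 1 ≤ (μ.rnDeriv ν x).toReal} ∪ sing.nullSetᶜ
  have hB : MeasurableSet B :=
    (measurableSet_le measurable_const (Measure.measurable_rnDeriv μ ν).ennreal_toReal).union
      sing.measurableSet_nullSet.compl
  have integral_B : ∫ x in B, |(μ.rnDeriv ν x).toReal - 1| ∂ν =
      ∫ x in B, ((μ.rnDeriv ν x).toReal - 1) ∂ν := by
    refine setIntegral_congr_ae hB ?_
    filter_upwards [measure_eq_zero_iff_ae_notMem.mp sing.measure_compl_nullSet] with x hx hxB
    exact abs_of_nonneg (sub_nonneg.mpr (hxB.resolve_right hx))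
  have integral_compl_B : ∫ x in Bᶜ, |(μ.rnDeriv ν x).toReal - 1| ∂ν =
      -∫ x in Bᶜ, ((μ.rnDeriv ν x).toReal - 1) ∂ν := by
    rw [← integral_neg]
    exact setIntegral_congr_fun hB.compl fun x hx ↦
      abs_of_nonpos (sub_nonpos.mpr (le_of_not_ge fun h ↦ hx (.inl h)))
  have singularPart_compl_B : (μ.singularPart ν).real Bᶜ = 0 := by
    have hBN : Bᶜ ⊆ sing.nullSet := Set.compl_subset_comm.mp Set.subset_union_right
    exact measureReal_mono_null hBN (by simp [measureReal_def, sing.measure_nullSet])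
  have singularPart_B :
      (μ.singularPart ν).real B = (μ.singularPart ν).real Set.univ := by
    rw [← measureReal_add_measureReal_compl hB, singularPart_compl_B, add_zero]
  have integrable_abs : Integrable (fun x ↦ |(μ.rnDeriv ν x).toReal - 1|) ν :=
    (Measure.integrable_toReal_rnDeriv.sub (integrable_const 1)).abs
  refine ⟨B, hB, ?_⟩
  rw [← integral_add_compl hB integrable_abs, integral_B, integral_compl_B,
    setIntegral_toReal_rnDeriv_sub_one, setIntegral_toReal_rnDeriv_sub_one, singularPart_B,
    singularPart_compl_B]
  ring

end HahnSet

lemma sub_le_div_of_le_mul_add {c δ p q : ℝ} (hc : -1 < c) (h : p ≤ c * q + δ) :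
    p - q ≤ ((c - 1) * (p + q) + 2 * δ) / (c + 1) := by
  rw [le_div_iff₀ (by linarith)]
  linarith

lemma sub_one_mul_two_add_four_mul_div_le {c δ : ℝ} (hc : 0 < c) (hδ : -c ≤ δ) :
    ((c - 1) * 2 + 4 * δ) / (c + 1) ≤ c - 1 + (1 + c⁻¹) * δ := by
  have gap : c - 1 + (1 + c⁻¹) * δ - ((c - 1) * 2 + 4 * δ) / (c + 1) =
      (c - 1) ^ 2 * (c + δ) / (c * (c + 1)) := by
    field_simp
    ring
  have : 0 ≤ c + δ := by linarith
  rw [← sub_nonneg, gap]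
  positivity

theorem total_variation_le_of_approx_dp_general
    {X : Type*} [MeasurableSpace X] (ε δ : ℝ)
    (P Q : Measure X) [IsFiniteMeasure P] [IsFiniteMeasure Q]
    (hDP₁ : ∀ A, MeasurableSet A → P.real A ≤ Real.exp ε * Q.real A + δ)
    (hDP₂ : ∀ A, MeasurableSet A → Q.real A ≤ Real.exp ε * P.real A + δ) :
    ∫ x, |(P.rnDeriv Q x).toReal - 1| ∂Q ≤
      ((Real.exp ε - 1) * (P.real Set.univ + Q.real Set.univ) + 4 * δ) / (Real.exp ε + 1) := by
  obtain ⟨B, hB, hahn⟩ := exists_integral_abs_toReal_rnDeriv_sub_one_add_singularPart_eq P Q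
  have hc : -1 < Real.exp ε := by linarith [Real.exp_pos ε]
  calc ∫ x, |(P.rnDeriv Q x).toReal - 1| ∂Q
    _ ≤ (P.real B - Q.real B) + (Q.real Bᶜ - P.real Bᶜ) :=
      hahn ▸ le_add_of_nonneg_right measureReal_nonneg
    _ ≤ ((Real.exp ε - 1) * (P.real B + Q.real B) + 2 * δ) / (Real.exp ε + 1) +
          ((Real.exp ε - 1) * (Q.real Bᶜ + P.real Bᶜ) + 2 * δ) / (Real.exp ε + 1) :=
      add_le_add (sub_le_div_of_le_mul_add hc (hDP₁ B hB))
        (sub_le_div_of_le_mul_add hc (hDP₂ Bᶜ hB.compl))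
    _ = ((Real.exp ε - 1) * (P.real Set.univ + Q.real Set.univ) + 4 * δ) / (Real.exp ε + 1) := by
      rw [← measureReal_add_measureReal_compl (μ := P) hB,
        ← measureReal_add_measureReal_compl (μ := Q) hB]
      ring

theorem total_variation_le_of_approx_dp
    {X : Type*} [MeasurableSpace X]
    (ε δ : ℝ) (hε : 0 < ε) (hδ : 0 ≤ δ)
    (P Q : Measure X) [IsProbabilityMeasure P] [IsProbabilityMeasure Q]
    (hPQ : P ≪ Q)
    (hDP₁ : ∀ A : Set X, MeasurableSet A →
      (P A).toReal ≤ Real.exp ε * (Q A).toReal + δ)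
    (hDP₂ : ∀ A : Set X, MeasurableSet A →
      (Q A).toReal ≤ Real.exp ε * (P A).toReal + δ) :
    (∫ x, |(P.rnDeriv Q x).toReal - 1| ∂Q) ≤
      Real.exp ε - 1 + (1 + Real.exp (-ε)) * δ := by
  have h_general := total_variation_le_of_approx_dp_general ε δ P Q hDP₁ hDP₂
  rw [probReal_univ, probReal_univ, one_add_one_eq_two] at h_general
  rw [Real.exp_neg]
  exact h_general.trans
    (sub_one_mul_two_add_four_mul_div_le (by positivity) (by linarith [ε.exp_pos]))
end
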